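/- For every network (X, A_X), the nonreciprocal clustering output u^NR_X, defined by u^NR_X(x,x') = max(ũ*_X(x,x'), ũ*_X(x',x)) where ũ*_X is the directed minimum chain cost, is a valid ultrametric on X: it is nonnegative, u^NR_X(x,x') = 0 iff x = x', it is symmetric, and it satisfies the strong triangle inequality u^NR_X(x,x'') ≤ max(u^NR_X(x,x'), u^NR_X(x',x'')) for all x,x',x''. -/

import Mathlib

noncomputable section

/-- A dissimilarity function on a node set: nonnegative and zero exactly on the diagonal.
It need not be symmetric nor satisfy the triangle inequality. -/
def IsDissim {X : Type} (A : X → X → ℝ) : Prop :=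
  (∀ x x', 0 ≤ A x x') ∧ (∀ x x', A x x' = 0 ↔ x = x')

/-- A symmetric dissimilarity. -/
def IsSym {X : Type} (A : X → X → ℝ) : Prop := ∀ x x', A x x' = A x' x

/-- An ultrametric: nonnegative, zero exactly on the diagonal, symmetric, and
satisfying the strong triangle inequality. -/
def IsUltrametric {X : Type} (u : X → X → ℝ) : Prop :=
  (∀ x x', 0 ≤ u x x') ∧ (∀ x x', u x x' = 0 ↔ x = x') ∧
    (∀ x x', u x x' = u x' x) ∧
    (∀ x x' x'', u x x'' ≤ max (u x x') (u x' x''))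

/-- The cost of the chain `x :: l`: the maximum dissimilarity over consecutive links. -/
def chainCost {X : Type} (A : X → X → ℝ) : X → List X → ℝ
  | _, [] => 0
  | x, y :: l => max (A x y) (chainCost A y l)

/-- The set of costs of chains from `x` to `x'`. -/
def chainCosts {X : Type} (A : X → X → ℝ) (x x' : X) : Set ℝ :=
  {c | ∃ l : List X, (x :: l).getLast (List.cons_ne_nil x l) = x' ∧ chainCost A x l = c}

/-- The directed minimum chain cost `ũ*_X(x,x')`: minimum cost over all chains from `x` to `x'`. -/
def minChainCost {X : Type} (A : X → X → ℝ) (x x' : X) : ℝ :=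
  sInf (chainCosts A x x')

/-- The nonreciprocal ultrametric `u^NR`. -/
def nonrecipUltra {X : Type} (A : X → X → ℝ) (x x' : X) : ℝ :=
  max (minChainCost A x x') (minChainCost A x' x)

/-- The reciprocal ultrametric `u^R`. -/
def recipUltra {X : Type} (A : X → X → ℝ) (x x' : X) : ℝ :=
  minChainCost (fun a b => max (A a b) (A b a)) x x'

/-- The unilateral ultrametric `u^U`. -/
def uniUltra {X : Type} (A : X → X → ℝ) (x x' : X) : ℝ :=
  minChainCost (fun a b => min (A a b) (A b a)) x x'

/-- The minimum loop cost `mlc(X, A_X)`: minimum cost over loops, i.e. chains from some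
node `x` back to itself containing at least one node different from `x`. -/
def mlc {X : Type} (A : X → X → ℝ) : ℝ :=
  sInf {c | ∃ (x : X) (l : List X),
    (x :: l).getLast (List.cons_ne_nil x l) = x ∧ (∃ y ∈ l, y ≠ x) ∧ chainCost A x l = c}

/-- The separation `sep(X, A_X)`: minimum dissimilarity over pairs of distinct nodes. -/
def sep {X : Type} (A : X → X → ℝ) : ℝ :=
  sInf {c | ∃ x x' : X, x ≠ x' ∧ A x x' = c}

/-- A hierarchical clustering method: assigns to every (finite) network an output
two-variable function on the same node set. -/
abbrev HCMethod := ∀ (X : Type) [Fintype X], (X → X → ℝ) → X → X → ℝ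

/-- A hierarchical clustering method outputs an ultrametric on every network. -/
def IsHCMethod (H : HCMethod) : Prop :=
  ∀ (X : Type) [Fintype X] (A : X → X → ℝ), IsDissim A → IsUltrametric (H X A)

/-- `p, q` are the two (distinct) nodes of a two-node set. -/
def TwoNode {X : Type} (p q : X) : Prop := p ≠ q ∧ ∀ x : X, x = p ∨ x = q

/-- Axiom of Value (A1): on every two-node network the output clusters the two nodes at
the maximum of the two dissimilarities. -/
def AxiomValue (H : HCMethod) : Prop :=
  ∀ (X : Type) [Fintype X] (p q : X), TwoNode p q →
    ∀ A : X → X → ℝ, IsDissim A → H X A p q = max (A p q) (A q p)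

/-- Axiom of Transformation (A2): dissimilarity-reducing maps do not increase output values. -/
def AxiomTransform (H : HCMethod) : Prop :=
  ∀ (X Y : Type) [Fintype X] [Fintype Y] (AX : X → X → ℝ) (AY : Y → Y → ℝ),
    IsDissim AX → IsDissim AY →
    ∀ φ : X → Y, (∀ x x', AY (φ x) (φ x') ≤ AX x x') →
    ∀ x x' : X, H Y AY (φ x) (φ x') ≤ H X AX x x'

/-- The canonical dissimilarity `A_{n,α,β}` on `Fin n`: `α` for `i > j`, `β` for `i < j`,
`0` on the diagonal. -/
def canonDissim (n : ℕ) (α β : ℝ) : Fin n → Fin n → ℝ :=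
  fun i j => if i = j then 0 else if j < i then α else β

/-- Extended Axiom of Value (A1'): on every permuted canonical network `Δ_n(α,β,Π)` the
output ultrametric equals `max(α,β)` off the diagonal. -/
def ExtAxiomValue (H : HCMethod) : Prop :=
  ∀ (n : ℕ) (α β : ℝ), 0 < α → 0 < β → ∀ π : Equiv.Perm (Fin n),
    ∀ i j : Fin n, i ≠ j →
      H (Fin n) (fun i j => canonDissim n α β (π i) (π j)) i j = max α β

/-- Alternative Axiom of Value (A1''): on every two-node network the output clusters the
two nodes at the minimum of the two dissimilarities. -/
def AltAxiomValue (H : HCMethod) : Prop :=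
  ∀ (X : Type) [Fintype X] (p q : X), TwoNode p q →
    ∀ A : X → X → ℝ, IsDissim A → H X A p q = min (A p q) (A q p)

/-- Agnostic Axiom of Value (A1'''): on every two-node network the output value lies
between the minimum and maximum of the two dissimilarities. -/
def AgnAxiomValue (H : HCMethod) : Prop :=
  ∀ (X : Type) [Fintype X] (p q : X), TwoNode p q →
    ∀ A : X → X → ℝ, IsDissim A →
      min (A p q) (A q p) ≤ H X A p q ∧ H X A p q ≤ max (A p q) (A q p)

/-! A chain costs less than `c > 0` exactly when each of its links does, so
`minChainCost A x x' < c` says that `x'` is reachable from `x` along links of dissimilarity less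
than `c`. Transitivity of reachability is then the strong triangle inequality for `minChainCost`,
and when distinct nodes are at dissimilarity at least `d > 0`, nothing but `x` itself is reachable
from `x` below the level `d`. Taking the maximum over both directions restores symmetry and
preserves the other two properties. -/

open Filter Topology

section MinChainCost

variable {X : Type} {A : X → X → ℝ} {x x' : X} {c d : ℝ}

theorem chainCost_lt_iff {l : List X} :
    chainCost A x l < c ↔ 0 < c ∧ (x :: l).IsChain fun a b => A a b < c := by
  induction l generalizing x with
  | nil => simp [chainCost]
  | cons y l ih => simp only [chainCost, max_lt_iff, ih, List.isChain_cons_cons, and_left_comm]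

theorem chainCost_nonneg (A : X → X → ℝ) (x : X) (l : List X) : 0 ≤ chainCost A x l :=
  not_lt.1 fun h => (chainCost_lt_iff.1 h).1.false

theorem chainCosts_bddBelow (A : X → X → ℝ) (x x' : X) : BddBelow (chainCosts A x x') :=
  ⟨0, by rintro _ ⟨l, -, rfl⟩; exact chainCost_nonneg A x l⟩

theorem chainCosts_nonempty (A : X → X → ℝ) (x x' : X) : (chainCosts A x x').Nonempty :=
  ⟨chainCost A x [x'], [x'], rfl, rfl⟩

theorem minChainCost_lt_iff :
    minChainCost A x x' < c ↔ 0 < c ∧ Relation.ReflTransGen (fun a b => A a b < c) x x' := by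
  rw [minChainCost, csInf_lt_iff (chainCosts_bddBelow A x x') (chainCosts_nonempty A x x')]
  constructor
  · rintro ⟨_, ⟨l, hlast, rfl⟩, hlt⟩
    obtain ⟨hc, hchain⟩ := chainCost_lt_iff.1 hlt
    exact ⟨hc, List.relationReflTransGen_of_exists_isChain_cons l hchain hlast⟩
  · rintro ⟨hc, hreach⟩
    obtain ⟨l, hchain, hlast⟩ := List.exists_isChain_cons_of_relationReflTransGen hreach
    exact ⟨chainCost A x l, ⟨l, hlast, rfl⟩, chainCost_lt_iff.2 ⟨hc, hchain⟩⟩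

theorem minChainCost_self (A : X → X → ℝ) (x : X) : minChainCost A x x = 0 :=
  le_antisymm
    (le_of_forall_gt fun _ hc => minChainCost_lt_iff.2 ⟨hc, .refl⟩)
    (not_lt.1 fun h => (minChainCost_lt_iff.1 h).1.false)

theorem minChainCost_le_max (A : X → X → ℝ) (x x' x'' : X) :
    minChainCost A x x'' ≤ max (minChainCost A x x') (minChainCost A x' x'') := by
  refine le_of_forall_gt fun c hc => ?_
  obtain ⟨hlt, hlt'⟩ := max_lt_iff.1 hc
  obtain ⟨hpos, hreach⟩ := minChainCost_lt_iff.1 hlt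
  obtain ⟨-, hreach'⟩ := minChainCost_lt_iff.1 hlt'
  exact minChainCost_lt_iff.2 ⟨hpos, hreach.trans hreach'⟩

theorem le_minChainCost_of_ne (hA : ∀ a b, a ≠ b → d ≤ A a b) (hne : x ≠ x') :
    d ≤ minChainCost A x x' := by
  by_contra! hlt
  obtain ⟨-, hreach⟩ := minChainCost_lt_iff.1 hlt
  have eq_of_lt : (fun a b => A a b < d) ≤ Eq := fun a b hab =>
    of_not_not fun h => (hA a b h).not_gt hab
  exact hne (Relation.reflTransGen_le_of_le eq_of_lt x x' hreach)

theorem minChainCost_eq_zero_iff (hd : 0 < d) (hA : ∀ a b, a ≠ b → d ≤ A a b) :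
    minChainCost A x x' = 0 ↔ x = x' := by
  constructor
  · intro hzero
    by_contra hne
    exact (hd.trans_le (le_minChainCost_of_ne hA hne)).ne' hzero
  · rintro rfl
    exact minChainCost_self A x

end MinChainCost

theorem isUltrametric_max_swap {X : Type} {u : X → X → ℝ}
    (hzero : ∀ x x', u x x' = 0 ↔ x = x')
    (htri : ∀ x x' x'', u x x'' ≤ max (u x x') (u x' x'')) :
    IsUltrametric fun x x' => max (u x x') (u x' x) := by
  refine ⟨fun x x' => ?nonneg, fun x x' => ⟨fun h => ?eq_of_zero, ?zero_of_eq⟩,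
    fun _ _ => max_comm _ _, fun x x' x'' => max_le ?forward ?backward⟩
  case nonneg =>
    calc 0 = u x x := ((hzero x x).2 rfl).symm
      _ ≤ max (u x x') (u x' x) := htri x x' x
  case eq_of_zero =>
    rcases max_choice (u x x') (u x' x) with hmax | hmax
    · exact (hzero x x').1 (hmax.symm.trans h)
    · exact ((hzero x' x).1 (hmax.symm.trans h)).symm
  case zero_of_eq =>
    rintro rfl
    exact (max_self _).trans ((hzero x x).2 rfl)
  case forward =>
    exact (htri x x' x'').trans (max_le_max (le_max_left _ _) (le_max_left _ _))
  case backward =>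
    calc u x'' x ≤ max (u x'' x') (u x' x) := htri x'' x' x
      _ = max (u x' x) (u x'' x') := max_comm _ _
      _ ≤ max (max (u x x') (u x' x)) (max (u x' x'') (u x'' x')) :=
        max_le_max (le_max_right _ _) (le_max_right _ _)

theorem IsDissim.exists_pos_forall_ne_le {X : Type} [Finite X] {A : X → X → ℝ}
    (hA : IsDissim A) : ∃ d > 0, ∀ x x', x ≠ x' → d ≤ A x x' := by
  obtain ⟨hnonneg, hzero⟩ := hA
  have hsmall : ∀ᶠ d in 𝓝[>] 0, ∀ x x', x ≠ x' → d ≤ A x x' := by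
    simp only [eventually_all]
    intro x x' hne
    have hpos : 0 < A x x' := (hnonneg x x').lt_of_ne' fun h => hne ((hzero x x').1 h)
    filter_upwards [Ioc_mem_nhdsGT hpos] with d hd using hd.2
  obtain ⟨d, hle, hd⟩ := (hsmall.and self_mem_nhdsWithin).exists
  exact ⟨d, hd, hle⟩

theorem nonrecipUltra_isUltrametric_general {X : Type} {A : X → X → ℝ} {d : ℝ} (hd : 0 < d)
    (hA : ∀ x x', x ≠ x' → d ≤ A x x') : IsUltrametric (nonrecipUltra A) :=
  isUltrametric_max_swap (fun _ _ => minChainCost_eq_zero_iff hd hA) (minChainCost_le_max A)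

/-- The nonreciprocal clustering output is a valid ultrametric. -/
theorem nonrecipUltra_isUltrametric
    (X : Type) [Fintype X] (A : X → X → ℝ) (hA : IsDissim A) :
    IsUltrametric (nonrecipUltra A) := by
  obtain ⟨d, hd, hle⟩ := hA.exists_pos_forall_ne_le
  exact nonrecipUltra_isUltrametric_general hd hle
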